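/- (Renormalization group equation for the toy model.) Let A be a Banach algebra with unit, H : ℝ → A continuous, and t ≥ 0. For λ ∈ ℝ, the series A^λ(t) := Σ_{n≥0} λ^n H_n(t) and β^λ(t) := Σ_{n≥1} λ^n H_{𝒟_n}(t) converge absolutely in A, the map λ ↦ A^λ(t) is differentiable, and λ · (∂/∂λ) A^λ(t) = A^λ(t) · β^λ(t). -/

import Mathlib

open MeasureTheory

open Classical in
/-- The descent set of a permutation `σ ∈ S_n` (1-based convention):
`Desc(σ) = {i ∈ {1,…,n−1} : σ(i) > σ(i+1)}`. -/
noncomputable def descSet {n : ℕ} (σ : Equiv.Perm (Fin n)) : Finset ℕ :=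
  (Finset.Ioo 0 n).filter
    (fun i => ∃ h : i < n, σ ⟨i, h⟩ < σ ⟨i - 1, lt_of_le_of_lt (Nat.sub_le i 1) h⟩)

/-- The simplex `Δ_t^n = {0 ≤ t₁ ≤ ⋯ ≤ tₙ ≤ t}` inside `Fin n → ℝ`. -/
def simplex (n : ℕ) (t : ℝ) : Set (Fin n → ℝ) :=
  {u | (∀ i, 0 ≤ u i ∧ u i ≤ t) ∧ ∀ i j, i ≤ j → u i ≤ u j}

variable {A : Type*} [NormedRing A] [NormedAlgebra ℝ A] [CompleteSpace A]

/-- The iterated integral `H_σ(t) = ∫_{Δ_t^n} H(t_{σ(1)})⋯H(t_{σ(n)}) dt₁⋯dtₙ`. -/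
noncomputable def Hperm (H : ℝ → A) {n : ℕ} (σ : Equiv.Perm (Fin n)) (t : ℝ) : A :=
  ∫ u in simplex n t, (List.ofFn (fun j => H (u (σ j)))).prod

/-- `H_n(t) = ∫_{Δ_t^n} H(t₁)⋯H(tₙ) dt₁⋯dtₙ`, with `H_0(t) = 1`. -/
noncomputable def Hn (H : ℝ → A) : ℕ → ℝ → A
  | 0, _ => 1
  | (n + 1), t => Hperm H (1 : Equiv.Perm (Fin (n + 1))) t

/-- The iterated integral evaluated on the Dynkin element:
`H_{𝒟_m}(t) = Σ_{j=0}^{m-1} (-1)^j H_{D_{={1,…,j}}^{(m)}}(t)`. -/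
noncomputable def HDyn (H : ℝ → A) (m : ℕ) (t : ℝ) : A :=
  ∑ j ∈ Finset.range m, (-1 : ℝ) ^ j •
    ∑ σ ∈ Finset.univ.filter
        (fun σ : Equiv.Perm (Fin m) => descSet σ = Finset.Icc 1 j),
      Hperm H σ t

/-- The ordered product `H(v₁)⋯H(vₙ)`. -/
noncomputable def orderedProd (H : ℝ → A) {n : ℕ} (v : Fin n → ℝ) : A :=
  (List.ofFn (fun j => H (v j))).prod

/-- The descents (1-based) of the tuple `v` are exactly the elements of `T` in `{1,…,n-1}`. -/
def HasDescents {α : Type*} [LT α] {n : ℕ} (v : Fin n → α) (T : Finset ℕ) : Prop :=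
  ∀ (i : ℕ) (h : i + 1 < n), v ⟨i + 1, h⟩ < v ⟨i, Nat.lt_of_succ_lt h⟩ ↔ i + 1 ∈ T

/-- Injective tuples in the cube `[0,t]^n` with prescribed descents. -/
def descentRegion (n : ℕ) (t : ℝ) (T : Finset ℕ) : Set (Fin n → ℝ) :=
  {v | Function.Injective v ∧ (∀ i, 0 ≤ v i ∧ v i ≤ t) ∧ HasDescents v T}

/-- Injective tuples in the cube `[0,t]^n` whose relative order is that of `σ`. -/
def permRegion {n : ℕ} (t : ℝ) (σ : Equiv.Perm (Fin n)) : Set (Fin n → ℝ) :=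
  {v | Function.Injective v ∧ (fun i => v (σ.symm i)) ∈ simplex n t}

/-- The integral of the ordered product over tuples with prescribed descents. -/
noncomputable def descentIntegral (H : ℝ → A) (n : ℕ) (t : ℝ) (T : Finset ℕ) : A :=
  ∫ v in descentRegion n t T, orderedProd H v

lemma continuous_orderedProd {A : Type*} [NormedRing A] {H : ℝ → A} (hH : Continuous H) (n : ℕ) :
    Continuous (orderedProd H : (Fin n → ℝ) → A) := by
  unfold orderedProd
  simp_rw [List.ofFn_eq_map]
  exact continuous_list_prod _ fun i _ => hH.comp (continuous_apply i)

lemma orderedProd_append {A : Type*} [NormedRing A] (H : ℝ → A) {m n : ℕ} (x : Fin m → ℝ)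
    (y : Fin n → ℝ) :
    orderedProd H (Fin.append x y) = orderedProd H x * orderedProd H y := by
  have : (fun j => H (Fin.append x y j)) = Fin.append (fun j => H (x j)) (fun j => H (y j)) := by
    ext j
    refine Fin.addCases (fun i => ?_) (fun i => ?_) j <;> simp
  simp only [orderedProd, this, List.ofFn_fin_append, List.prod_append]

lemma ae_injective (n : ℕ) : ∀ᵐ v : Fin n → ℝ, Function.Injective v := by
  have key : ∀ i j : Fin n, i ≠ j → ∀ᵐ v : Fin n → ℝ, v i ≠ v j := by
    intro i j hij
    let p : Submodule ℝ (Fin n → ℝ) :=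
      LinearMap.ker (LinearMap.proj (R := ℝ) (φ := fun _ : Fin n => ℝ) i - LinearMap.proj j)
    have hp : p ≠ ⊤ := by
      intro h
      have : (Pi.single i 1 : Fin n → ℝ) ∈ p := h ▸ Submodule.mem_top
      simp [p, hij.symm] at this
    have h0 := Measure.addHaar_submodule volume p hp
    rw [ae_iff]
    convert h0 using 2
    ext v
    simp [p, sub_eq_zero]
  have : ∀ᵐ v : Fin n → ℝ, ∀ i j : Fin n, i ≠ j → v i ≠ v j := by
    simp_rw [ae_all_iff]
    exact key
  filter_upwards [this] with v hv i j h
  by_contra hne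
  exact hv i j hne h

lemma measurableSet_injective (n : ℕ) : MeasurableSet {v : Fin n → ℝ | Function.Injective v} := by
  have : {v : Fin n → ℝ | Function.Injective v} =
      ⋂ (i) (j) (_ : i ≠ j), {v : Fin n → ℝ | v i = v j}ᶜ := by
    ext v
    simp only [Set.mem_ofPred_eq, Set.mem_iInter, Set.mem_compl_iff]
    exact ⟨fun h i j hij hv => hij (h hv), fun h i j hv => by_contra fun hij => h i j hij hv⟩
  rw [this]
  refine .iInter fun i => .iInter fun j => .iInter fun _ => ?_
  exact (measurableSet_eq_fun (measurable_pi_apply i) (measurable_pi_apply j)).compl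

lemma measurableSet_cube (n : ℕ) (t : ℝ) :
    MeasurableSet {v : Fin n → ℝ | ∀ i, 0 ≤ v i ∧ v i ≤ t} := by
  simp only [Set.ofPred_forall]
  exact .iInter fun i => (measurableSet_le measurable_const (measurable_pi_apply i)).inter
    (measurableSet_le (measurable_pi_apply i) measurable_const)

lemma measurableSet_simplex (n : ℕ) (t : ℝ) : MeasurableSet (simplex n t) := by
  have : simplex n t = {v | ∀ i, 0 ≤ v i ∧ v i ≤ t} ∩ ⋂ (i) (j) (_ : i ≤ j), {v | v i ≤ v j} := by
    ext v
    simp [simplex]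
  rw [this]
  refine (measurableSet_cube n t).inter ?_
  exact .iInter fun i => .iInter fun j => .iInter fun _ =>
    measurableSet_le (measurable_pi_apply i) (measurable_pi_apply j)

lemma measurableSet_descentRegion (n : ℕ) (t : ℝ) (T : Finset ℕ) :
    MeasurableSet (descentRegion n t T) := by
  have : descentRegion n t T = {v | Function.Injective v} ∩ ({v | ∀ i, 0 ≤ v i ∧ v i ≤ t} ∩
      ⋂ (i : ℕ) (h : i + 1 < n),
        {v | v ⟨i + 1, h⟩ < v ⟨i, Nat.lt_of_succ_lt h⟩ ↔ i + 1 ∈ T}) := by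
    ext v
    simp [descentRegion, HasDescents]
  rw [this]
  refine (measurableSet_injective n).inter ((measurableSet_cube n t).inter ?_)
  refine .iInter fun i => .iInter fun h => ?_
  exact (measurableSet_lt (by fun_prop) (by fun_prop)).iff (.const _)

lemma measurableSet_permRegion {n : ℕ} (t : ℝ) (σ : Equiv.Perm (Fin n)) :
    MeasurableSet (permRegion t σ) := by
  have : permRegion t σ =
      {v | Function.Injective v} ∩ (fun v i => v (σ.symm i)) ⁻¹' simplex n t := by
    ext v
    simp [permRegion]
  rw [this]
  exact (measurableSet_injective n).inter
    (measurableSet_preimage (by fun_prop)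
      (measurableSet_simplex n t))

lemma integrableOn_orderedProd {A : Type*} [NormedRing A] {H : ℝ → A} (hH : Continuous H) {n : ℕ}
    (t : ℝ)
    {s : Set (Fin n → ℝ)} (hs : ∀ v ∈ s, ∀ i, 0 ≤ v i ∧ v i ≤ t) :
    IntegrableOn (orderedProd H) s := by
  have hc : IsCompact (Set.Icc (fun _ : Fin n => (0 : ℝ)) (fun _ => t)) := isCompact_Icc
  refine ((continuous_orderedProd hH n).continuousOn.integrableOn_compact hc).mono_set ?_
  exact fun v hv => ⟨fun i => (hs v hv i).1, fun i => (hs v hv i).2⟩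

lemma mem_cube_of_mem_permRegion {n : ℕ} {t : ℝ} {σ : Equiv.Perm (Fin n)} {v : Fin n → ℝ}
    (hv : v ∈ permRegion t σ) (i : Fin n) : 0 ≤ v i ∧ v i ≤ t := by
  simpa using hv.2.1 (σ i)

lemma lt_iff_of_mem_permRegion {n : ℕ} {t : ℝ} {σ : Equiv.Perm (Fin n)} {v : Fin n → ℝ}
    (hv : v ∈ permRegion t σ) (i j : Fin n) : v i < v j ↔ σ i < σ j := by
  have hm : StrictMono fun i => v (σ.symm i) :=
    Monotone.strictMono_of_injective (fun i j h => hv.2.2 i j h) (hv.1.comp σ.symm.injective)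
  simpa using hm.lt_iff_lt (a := σ i) (b := σ j)

lemma perm_eq_of_lt_iff_lt {n : ℕ} {σ τ : Equiv.Perm (Fin n)}
    (h : ∀ i j, σ i < σ j ↔ τ i < τ j) : σ = τ := by
  have hm : StrictMono fun i => τ (σ.symm i) := fun i j hij => by
    rw [← h]; simpa using hij
  let e : Fin n ≃o Fin n := hm.orderIsoOfSurjective _ (τ.surjective.comp σ.symm.surjective)
  ext i
  have := Fin.coe_orderIso_apply e (σ i)
  simpa [e] using this.symm

lemma eq_of_mem_permRegion {n : ℕ} {t : ℝ} {σ τ : Equiv.Perm (Fin n)} {v : Fin n → ℝ}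
    (hσ : v ∈ permRegion t σ) (hτ : v ∈ permRegion t τ) : σ = τ :=
  perm_eq_of_lt_iff_lt fun i j =>
    (lt_iff_of_mem_permRegion hσ i j).symm.trans (lt_iff_of_mem_permRegion hτ i j)

lemma exists_mem_permRegion {n : ℕ} {t : ℝ} {v : Fin n → ℝ} (hv : Function.Injective v)
    (hc : ∀ i, 0 ≤ v i ∧ v i ≤ t) : ∃ σ : Equiv.Perm (Fin n), v ∈ permRegion t σ :=
  ⟨(Tuple.sort v).symm, hv, fun _ => hc _, fun _ _ h => Tuple.monotone_sort v h⟩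

lemma descSet_eq_iff {n : ℕ} (σ : Equiv.Perm (Fin n)) {T : Finset ℕ}
    (hT : T ⊆ Finset.Ioo 0 n) : descSet σ = T ↔ HasDescents σ T := by
  have hmem : ∀ (i : ℕ) (h : i + 1 < n), i + 1 ∈ descSet σ ↔
      σ ⟨i + 1, h⟩ < σ ⟨i, Nat.lt_of_succ_lt h⟩ := fun i h => by simp [descSet, h]
  constructor
  · rintro rfl i h
    exact (hmem i h).symm
  · intro hd
    ext k
    rcases k with _ | k
    · have : 0 ∉ T := fun h => by simpa using hT h
      simp [descSet, this]
    · by_cases h : k + 1 < n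
      · rw [hmem k h, hd k h]
      · have : k + 1 ∉ T := fun hk => h (Finset.mem_Ioo.1 (hT hk)).2
        simp [descSet, h, this]

lemma biUnion_permRegion {n : ℕ} (t : ℝ) {T : Finset ℕ} (hT : T ⊆ Finset.Ioo 0 n) :
    ⋃ σ ∈ Finset.univ.filter (fun σ : Equiv.Perm (Fin n) => descSet σ = T), permRegion t σ =
      descentRegion n t T := by
  ext v
  simp only [Finset.mem_filter, Finset.mem_univ, true_and, Set.mem_iUnion, exists_prop,
    descSet_eq_iff _ hT]
  constructor
  · rintro ⟨σ, hσ, hv⟩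
    exact ⟨hv.1, mem_cube_of_mem_permRegion hv, fun i h =>
      (lt_iff_of_mem_permRegion hv _ _).trans (hσ i h)⟩
  · rintro ⟨hv, hc, hd⟩
    obtain ⟨σ, hσ⟩ := exists_mem_permRegion hv hc
    exact ⟨σ, fun i h => (lt_iff_of_mem_permRegion hσ _ _).symm.trans (hd i h), hσ⟩

lemma pairwiseDisjoint_permRegion {n : ℕ} (t : ℝ) (s : Set (Equiv.Perm (Fin n))) :
    s.PairwiseDisjoint (permRegion t) := fun _ _ _ _ hne =>
  Set.disjoint_left.2 fun _ hσ hτ => hne (eq_of_mem_permRegion hσ hτ)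

/-- Permuting the coordinates of a real tuple preserves Lebesgue measure. -/
lemma measurePreserving_comp_perm {n : ℕ} (σ : Equiv.Perm (Fin n)) :
    MeasurePreserving (MeasurableEquiv.piCongrLeft (fun _ : Fin n => ℝ) σ) :=
  volume_measurePreserving_piCongrLeft _ σ

lemma piCongrLeft_eq {n : ℕ} (σ : Equiv.Perm (Fin n)) (v : Fin n → ℝ) :
    MeasurableEquiv.piCongrLeft (fun _ : Fin n => ℝ) σ v = fun i => v (σ.symm i) := by
  ext i
  obtain ⟨j, rfl⟩ := σ.surjective i
  simp [MeasurableEquiv.coe_piCongrLeft, Equiv.piCongrLeft_apply_apply]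

lemma preimage_simplex_ae_eq {n : ℕ} (t : ℝ) (σ : Equiv.Perm (Fin n)) :
    MeasurableEquiv.piCongrLeft (fun _ : Fin n => ℝ) σ ⁻¹' simplex n t
      =ᵐ[volume] permRegion t σ := by
  filter_upwards [ae_injective n] with v hv
  refine propext ?_
  change _ ∈ simplex n t ↔ v ∈ permRegion t σ
  simp [permRegion, piCongrLeft_eq, hv]

lemma Hperm_eq_integral_permRegion {A : Type*} [NormedRing A] [NormedAlgebra ℝ A] (H : ℝ → A)
    {n : ℕ} (σ : Equiv.Perm (Fin n)) (t : ℝ) :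
    Hperm H σ t = ∫ v in permRegion t σ, orderedProd H v := by
  rw [← setIntegral_congr_set (preimage_simplex_ae_eq t σ), Hperm,
    ← (measurePreserving_comp_perm σ).setIntegral_preimage_emb
      (MeasurableEquiv.measurableEmbedding _)]
  simp [piCongrLeft_eq, orderedProd]

lemma sum_Hperm_eq_descentIntegral {A : Type*} [NormedRing A] [NormedAlgebra ℝ A] {H : ℝ → A}
    (hH : Continuous H) {n : ℕ} (t : ℝ) {T : Finset ℕ}
    (hT : T ⊆ Finset.Ioo 0 n) :
    ∑ σ ∈ Finset.univ.filter (fun σ : Equiv.Perm (Fin n) => descSet σ = T), Hperm H σ t =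
      descentIntegral H n t T := by
  rw [descentIntegral, ← biUnion_permRegion t hT, integral_biUnion_finset]
  · exact Finset.sum_congr rfl fun σ _ => Hperm_eq_integral_permRegion H σ t
  · exact fun σ _ => measurableSet_permRegion t σ
  · exact pairwiseDisjoint_permRegion t _
  · exact fun σ _ => integrableOn_orderedProd hH t fun v hv => mem_cube_of_mem_permRegion hv

lemma volume_permRegion {n : ℕ} (t : ℝ) (σ : Equiv.Perm (Fin n)) :
    volume (permRegion t σ) = volume (simplex n t) := by
  rw [← measure_congr (preimage_simplex_ae_eq t σ),
    (measurePreserving_comp_perm σ).measure_preimage_equiv]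

lemma volume_simplex_le (n : ℕ) {t : ℝ} (ht : 0 ≤ t) :
    volume.real (simplex n t) ≤ t ^ n / n.factorial := by
  have hle : (n.factorial : ENNReal) * volume (simplex n t) ≤ ENNReal.ofReal (t ^ n) := by
    calc (n.factorial : ENNReal) * volume (simplex n t)
        = ∑ σ : Equiv.Perm (Fin n), volume (permRegion t σ) := by
          simp [volume_permRegion, Fintype.card_perm]
      _ = volume (⋃ σ ∈ (Finset.univ : Finset (Equiv.Perm (Fin n))), permRegion t σ) :=
          (measure_biUnion_finset (pairwiseDisjoint_permRegion t _)
            fun σ _ => measurableSet_permRegion t σ).symm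
      _ ≤ volume (Set.Icc (fun _ : Fin n => (0 : ℝ)) (fun _ => t)) := by
          refine measure_mono ?_
          simp only [Set.iUnion_subset_iff]
          exact fun σ _ v hv => ⟨fun i => (mem_cube_of_mem_permRegion hv i).1,
            fun i => (mem_cube_of_mem_permRegion hv i).2⟩
      _ = ENNReal.ofReal (t ^ n) := by
          simp [Real.volume_Icc_pi, ENNReal.ofReal_pow ht]
  have := ENNReal.toReal_mono ENNReal.ofReal_ne_top hle
  rw [ENNReal.toReal_ofReal (by positivity), ENNReal.toReal_mul, ENNReal.toReal_natCast] at this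
  rw [le_div_iff₀ (by positivity), mul_comm]
  exact this

lemma descentIntegral_zero (H : ℝ → A) (t : ℝ) : descentIntegral H 0 t ∅ = 1 := by
  have h : descentRegion 0 t ∅ = Set.univ := by
    ext v
    simp [descentRegion, HasDescents, Function.injective_of_subsingleton]
  simp [descentIntegral, h, orderedProd, Measure.volume_pi_eq_dirac (default : Fin 0 → ℝ)]

/-- Concatenation of tuples as a measurable equivalence. -/
noncomputable def appendMeasurableEquiv (m n : ℕ) :
    (Fin m → ℝ) × (Fin n → ℝ) ≃ᵐ (Fin (m + n) → ℝ) :=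
  (MeasurableEquiv.sumPiEquivProdPi fun _ : Fin m ⊕ Fin n => ℝ).symm.trans
    (MeasurableEquiv.piCongrLeft (fun _ : Fin (m + n) => ℝ) finSumFinEquiv)

lemma appendMeasurableEquiv_apply {m n : ℕ} (z : (Fin m → ℝ) × (Fin n → ℝ)) :
    appendMeasurableEquiv m n z = Fin.append z.1 z.2 := by
  ext i
  obtain ⟨j, rfl⟩ := (finSumFinEquiv (m := m) (n := n)).surjective i
  simp only [appendMeasurableEquiv, MeasurableEquiv.trans_apply, MeasurableEquiv.coe_piCongrLeft,
    Equiv.piCongrLeft_apply_apply]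
  rcases j with j | j <;> simp [MeasurableEquiv.coe_sumPiEquivProdPi_symm]

lemma measurePreserving_appendMeasurableEquiv (m n : ℕ) :
    MeasurePreserving (appendMeasurableEquiv m n) :=
  (volume_measurePreserving_piCongrLeft (fun _ : Fin (m + n) => ℝ) finSumFinEquiv).comp
    (volume_measurePreserving_sumPiEquivProdPi_symm fun _ : Fin m ⊕ Fin n => ℝ)

lemma hasDescents_append_iff {m n : ℕ} (hm : 0 < m) (hn : 0 < n) {T : Finset ℕ}
    (hT : T ⊆ Finset.Ioo 0 m) (x : Fin m → ℝ) (y : Fin n → ℝ) :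
    HasDescents x T ∧ HasDescents y ∅ ↔
      HasDescents (Fin.append x y) T ∨ HasDescents (Fin.append x y) (insert m T) := by
  have hl : ∀ i (h : i < m), Fin.append x y ⟨i, by omega⟩ = x ⟨i, h⟩ := fun i h =>
    Fin.append_left x y ⟨i, h⟩
  have hr : ∀ i (h : m + i < m + n), Fin.append x y ⟨m + i, h⟩ = y ⟨i, by omega⟩ := fun i h =>
    Fin.append_right x y ⟨i, by omega⟩
  have hT' : ∀ i, i ∈ T → i < m := fun i hi => (Finset.mem_Ioo.1 (hT hi)).2
  have key : ∀ T' : Finset ℕ, (∀ i, i ≠ m → (i ∈ T' ↔ i ∈ T)) →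
      (HasDescents (Fin.append x y) T' ↔ HasDescents x T ∧ HasDescents y ∅ ∧
        (y ⟨0, hn⟩ < x ⟨m - 1, by omega⟩ ↔ m ∈ T')) := by
    intro T' hTT
    constructor
    · intro h
      refine ⟨fun i hi => ?_, fun i hi => ?_, ?_⟩
      · have := h i (by omega)
        rwa [hl _ hi, hl i (by omega), hTT _ (by omega)] at this
      · have := h (m + i) (by omega)
        rw [hr i (by omega)] at this
        have h2 := hr (i + 1) (by omega)
        rw [show (⟨m + i + 1, by omega⟩ : Fin (m + n)) = ⟨m + (i + 1), by omega⟩ from rfl, h2,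
          hTT _ (by omega)] at this
        have h3 : m + i + 1 ∉ T := fun h => by have := hT' _ h; omega
        simpa [h3] using this
      · obtain ⟨p, rfl⟩ : ∃ p, m = p + 1 := ⟨m - 1, by omega⟩
        have := h p (by omega)
        rw [hl p (by omega)] at this
        have h2 := hr 0 (by omega)
        simp only [add_zero] at h2
        rw [h2] at this
        simpa using this
    · rintro ⟨hx, hy, hb⟩ i hi
      rcases lt_trichotomy (i + 1) m with h | h | h
      · rw [hl _ h, hl i (by omega), hTT _ (by omega)]
        exact hx i h
      · subst h
        have h2 := hr 0 (by omega)
        simp only [add_zero] at h2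
        rw [hl i (by omega), h2]
        simpa using hb
      · obtain ⟨k, rfl⟩ : ∃ k, i = m + k := ⟨i - m, by omega⟩
        have h2 := hr (k + 1) (by omega)
        rw [hr k (by omega), show (⟨m + k + 1, by omega⟩ : Fin (m + n)) = ⟨m + (k + 1), by omega⟩
          from rfl, h2, hTT _ (by omega)]
        have h3 : m + k + 1 ∉ T := fun h => by have := hT' _ h; omega
        simpa [h3] using hy k (by omega)
  have hmT : m ∉ T := fun h => lt_irrefl _ (hT' m h)
  rw [key T fun _ _ => Iff.rfl, key (insert m T) fun i hi => by simp [hi]]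
  simp only [hmT, Finset.mem_insert_self, iff_true, iff_false]
  tauto

lemma disjoint_descentRegion {m N : ℕ} (hm : 0 < m) (hmN : m < N) (t : ℝ) {T : Finset ℕ}
    (hT : m ∉ T) : Disjoint (descentRegion N t T) (descentRegion N t (insert m T)) := by
  refine Set.disjoint_left.2 fun v hv hv' => hT ?_
  obtain ⟨p, rfl⟩ : ∃ p, m = p + 1 := ⟨m - 1, by omega⟩
  exact (hv.2.2 p hmN).1 ((hv'.2.2 p hmN).2 (Finset.mem_insert_self _ _))

lemma preimage_descentRegion_ae_eq {m n : ℕ} (hm : 0 < m) (hn : 0 < n) (t : ℝ) {T : Finset ℕ}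
    (hT : T ⊆ Finset.Ioo 0 m) :
    ((appendMeasurableEquiv m n).symm ⁻¹' (descentRegion m t T ×ˢ descentRegion n t ∅) :
      Set (Fin (m + n) → ℝ)) =ᵐ[volume]
      (descentRegion (m + n) t T ∪ descentRegion (m + n) t (insert m T) :
        Set (Fin (m + n) → ℝ)) := by
  filter_upwards [ae_injective (m + n)] with v hv
  refine propext ?_
  change (appendMeasurableEquiv m n).symm v ∈ descentRegion m t T ×ˢ descentRegion n t ∅ ↔
    v ∈ descentRegion (m + n) t T ∪ descentRegion (m + n) t (insert m T)
  obtain ⟨⟨x, y⟩, rfl⟩ := (appendMeasurableEquiv m n).surjective v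
  rw [MeasurableEquiv.symm_apply_apply]
  rw [appendMeasurableEquiv_apply] at hv ⊢
  have hd := hasDescents_append_iff hm hn hT x y
  have hx : Function.Injective x := fun i j h => by
    have := @hv (Fin.castAdd n i) (Fin.castAdd n j) (by simpa using h)
    simpa using this
  have hy : Function.Injective y := fun i j h => by
    have := @hv (Fin.natAdd m i) (Fin.natAdd m j) (by simpa using h)
    simpa using this
  have hc : (∀ i, 0 ≤ Fin.append x y i ∧ Fin.append x y i ≤ t) ↔
      (∀ i, 0 ≤ x i ∧ x i ≤ t) ∧ ∀ i, 0 ≤ y i ∧ y i ≤ t := by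
    rw [Fin.forall_fin_add]
    simp
  simp only [Set.mem_prod, Set.mem_union, descentRegion, Set.mem_ofPred_eq, hv, hx, hy, hc,
    true_and]
  tauto

lemma descentIntegral_mul {H : ℝ → A} (hH : Continuous H) {m n : ℕ} (hm : 0 < m) (hn : 0 < n)
    (t : ℝ) {T : Finset ℕ} (hT : T ⊆ Finset.Ioo 0 m) :
    descentIntegral H m t T * descentIntegral H n t ∅ =
      descentIntegral H (m + n) t T + descentIntegral H (m + n) t (insert m T) := by
  have hint : ∀ (N : ℕ) (S : Finset ℕ), IntegrableOn (orderedProd H) (descentRegion N t S) :=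
    fun N S => integrableOn_orderedProd hH t fun v hv => hv.2.1
  have hmT : m ∉ T := fun h => lt_irrefl _ (Finset.mem_Ioo.1 (hT h)).2
  have hprod := integral_prod_bilin (𝕜 := ℝ) (ContinuousLinearMap.mul ℝ A) (hint m T) (hint n ∅)
  simp only [ContinuousLinearMap.mul_apply'] at hprod
  rw [descentIntegral, descentIntegral, ← hprod, Measure.prod_restrict, ← Measure.volume_eq_prod,
    ← (measurePreserving_appendMeasurableEquiv m n).symm.setIntegral_preimage_emb
      (MeasurableEquiv.measurableEmbedding _),
    setIntegral_congr_set (preimage_descentRegion_ae_eq hm hn t hT), descentIntegral,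
    descentIntegral, ← setIntegral_union (disjoint_descentRegion hm (by omega) t hmT)
      (measurableSet_descentRegion _ _ _) (hint _ _) (hint _ _)]
  refine integral_congr_ae (.of_forall fun v => ?_)
  obtain ⟨z, rfl⟩ := (appendMeasurableEquiv m n).surjective v
  simp only [MeasurableEquiv.symm_apply_apply]
  rw [appendMeasurableEquiv_apply, orderedProd_append]

lemma strictMono_of_hasDescents_empty {n : ℕ} {σ : Equiv.Perm (Fin n)}
    (h : HasDescents σ ∅) : StrictMono σ := by
  cases n with
  | zero => exact Subsingleton.strictMono _
  | succ n =>
    refine Fin.strictMono_iff_lt_succ.2 fun i => lt_of_le_of_ne ?_ ?_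
    · have := h i (by omega)
      simp only [Finset.notMem_empty, iff_false, not_lt] at this
      exact this
    · exact fun he => (Fin.castSucc_lt_succ (i := i)).ne (σ.injective he)

lemma strictAnti_of_hasDescents_Icc {n : ℕ} {σ : Equiv.Perm (Fin n)}
    (h : HasDescents σ (Finset.Icc 1 (n - 1))) : StrictAnti σ := by
  cases n with
  | zero => exact Subsingleton.strictAnti _
  | succ n =>
    refine Fin.strictAnti_iff_succ_lt.2 fun i => ?_
    exact (h i (by omega)).2 (by simp)

lemma filter_descSet_empty (n : ℕ) :
    Finset.univ.filter (fun σ : Equiv.Perm (Fin n) => descSet σ = ∅) = {1} := by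
  ext σ
  simp only [Finset.mem_filter, Finset.mem_univ, true_and, Finset.mem_singleton,
    descSet_eq_iff _ (Finset.empty_subset _)]
  constructor
  · intro h
    exact perm_eq_of_lt_iff_lt fun i j => by simp [(strictMono_of_hasDescents_empty h).lt_iff_lt]
  · rintro rfl i h
    simp

lemma descentIntegral_empty_eq_Hperm {A : Type*} [NormedRing A] [NormedAlgebra ℝ A] {H : ℝ → A}
    (hH : Continuous H) (n : ℕ) (t : ℝ) :
    descentIntegral H n t ∅ = Hperm H (1 : Equiv.Perm (Fin n)) t := by
  rw [← sum_Hperm_eq_descentIntegral hH t (Finset.empty_subset _), filter_descSet_empty,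
    Finset.sum_singleton]

lemma Hn_eq_descentIntegral {H : ℝ → A} (hH : Continuous H) (n : ℕ) (t : ℝ) :
    Hn H n t = descentIntegral H n t ∅ := by
  cases n with
  | zero => rw [descentIntegral_zero, Hn]
  | succ n => rw [descentIntegral_empty_eq_Hperm hH, Hn]

lemma HDyn_eq_sum_descentIntegral {A : Type*} [NormedRing A] [NormedAlgebra ℝ A] {H : ℝ → A}
    (hH : Continuous H) (m : ℕ) (t : ℝ) :
    HDyn H m t =
      ∑ j ∈ Finset.range m, (-1 : ℝ) ^ j • descentIntegral H m t (Finset.Icc 1 j) := by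
  refine Finset.sum_congr rfl fun j hj => ?_
  rw [sum_Hperm_eq_descentIntegral hH t fun i hi => ?_]
  simp only [Finset.mem_range, Finset.mem_Icc, Finset.mem_Ioo] at *
  omega

lemma norm_prod_ofFn_le {A : Type*} [NormedRing A] {n : ℕ} {f : Fin n → A} {C : ℝ}
    (hf : ∀ i, ‖f i‖ ≤ C) :
    ‖(List.ofFn f).prod‖ ≤ ‖(1 : A)‖ * C ^ n := by
  induction n with
  | zero => simp
  | succ n ih =>
    have hC : 0 ≤ C := (norm_nonneg _).trans (hf 0)
    rw [List.ofFn_succ, List.prod_cons]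
    calc ‖f 0 * (List.ofFn fun i => f i.succ).prod‖
        ≤ ‖f 0‖ * ‖(List.ofFn fun i => f i.succ).prod‖ := norm_mul_le _ _
      _ ≤ C * (‖(1 : A)‖ * C ^ n) :=
          mul_le_mul (hf 0) (ih fun i => hf i.succ) (norm_nonneg _) hC
      _ = ‖(1 : A)‖ * C ^ (n + 1) := by ring

lemma norm_Hperm_le {A : Type*} [NormedRing A] [NormedAlgebra ℝ A] {H : ℝ → A} {t C : ℝ}
    (ht : 0 ≤ t) (hC : ∀ s ∈ Set.Icc 0 t, ‖H s‖ ≤ C)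
    {n : ℕ} (σ : Equiv.Perm (Fin n)) :
    ‖Hperm H σ t‖ ≤ ‖(1 : A)‖ * ((C * t) ^ n / n.factorial) := by
  have hC0 : 0 ≤ C := (norm_nonneg _).trans (hC 0 ⟨le_rfl, ht⟩)
  have hfin : volume (simplex n t) < ⊤ := by
    refine (measure_mono fun v hv => ?_).trans_lt
      (isCompact_Icc (a := fun _ : Fin n => (0 : ℝ)) (b := fun _ => t)).measure_lt_top
    exact ⟨fun i => (hv.1 i).1, fun i => (hv.1 i).2⟩
  calc ‖Hperm H σ t‖ ≤ ‖(1 : A)‖ * C ^ n * volume.real (simplex n t) :=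
        norm_setIntegral_le_of_norm_le_const hfin fun v hv =>
          norm_prod_ofFn_le fun j => hC _ (hv.1 _)
    _ ≤ ‖(1 : A)‖ * C ^ n * (t ^ n / n.factorial) := by
        gcongr
        exact volume_simplex_le n ht
    _ = ‖(1 : A)‖ * ((C * t) ^ n / n.factorial) := by rw [mul_pow]; ring

lemma norm_descentIntegral_Icc_le {A : Type*} [NormedRing A] [NormedAlgebra ℝ A] {H : ℝ → A}
    (hH : Continuous H) {t C : ℝ} (ht : 0 ≤ t)
    (hC : ∀ s ∈ Set.Icc 0 t, ‖H s‖ ≤ C) (n : ℕ) :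
    ‖descentIntegral H n t (Finset.Icc 1 (n - 1))‖ ≤
      ‖(1 : A)‖ * ((C * t) ^ n / n.factorial) := by
  have hC0 : 0 ≤ C := (norm_nonneg _).trans (hC 0 ⟨le_rfl, ht⟩)
  have hT : Finset.Icc 1 (n - 1) ⊆ Finset.Ioo 0 n := fun i hi => by
    simp only [Finset.mem_Icc, Finset.mem_Ioo] at *
    omega
  rw [← sum_Hperm_eq_descentIntegral hH t hT]
  have hcard : (Finset.univ.filter
      fun σ : Equiv.Perm (Fin n) => descSet σ = Finset.Icc 1 (n - 1)).card ≤ 1 := by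
    refine Finset.card_le_one.2 fun σ hσ τ hτ => ?_
    simp only [Finset.mem_filter, Finset.mem_univ, true_and, descSet_eq_iff _ hT] at hσ hτ
    exact perm_eq_of_lt_iff_lt fun i j => by
      rw [(strictAnti_of_hasDescents_Icc hσ).lt_iff_gt, (strictAnti_of_hasDescents_Icc hτ).lt_iff_gt]
  refine (norm_sum_le_of_le _ fun σ _ => norm_Hperm_le ht hC σ).trans ?_
  rw [Finset.sum_const, nsmul_eq_mul]
  exact mul_le_of_le_one_left (by positivity) (by exact_mod_cast hcard)

lemma descentIntegral_Icc_mul_of_pos {H : ℝ → A} (hH : Continuous H) (t : ℝ) {m j : ℕ}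
    (hj : j < m) :
    descentIntegral H (j + 1) t (Finset.Icc 1 j) * descentIntegral H (m - (j + 1)) t ∅ =
      descentIntegral H m t (Finset.Icc 1 j) +
        if j + 1 < m then descentIntegral H m t (Finset.Icc 1 (j + 1)) else 0 := by
  split_ifs with h
  · have hins : insert (j + 1) (Finset.Icc 1 j) = Finset.Icc 1 (j + 1) := by
      ext i
      simp only [Finset.mem_insert, Finset.mem_Icc]
      omega
    have hT : Finset.Icc 1 j ⊆ Finset.Ioo 0 (j + 1) := fun i hi => by
      simp only [Finset.mem_Icc, Finset.mem_Ioo] at *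
      omega
    rw [descentIntegral_mul hH (by omega) (by omega) t hT, hins,
      show j + 1 + (m - (j + 1)) = m by omega]
  · obtain rfl : m = j + 1 := by omega
    simp [descentIntegral_zero]

/-- Telescoping of the alternating products of decreasing and increasing integrals. -/
lemma sum_antidiagonal_descentIntegral {H : ℝ → A} (hH : Continuous H) (t : ℝ) {m : ℕ}
    (hm : 0 < m) (f : ℕ → ℝ) :
    ∑ p ∈ Finset.HasAntidiagonal.antidiagonal m,
        ((-1 : ℝ) ^ p.1 • descentIntegral H p.1 t (Finset.Icc 1 (p.1 - 1))) *
          (f p.2 • descentIntegral H p.2 t ∅) =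
      ∑ j ∈ Finset.range m, ((-1 : ℝ) ^ j * (f (m - j) - f (m - (j + 1)))) •
        descentIntegral H m t (Finset.Icc 1 j) := by
  set g : ℕ → A := fun j => if j < m then descentIntegral H m t (Finset.Icc 1 j) else 0 with hg
  have hgj : ∀ j < m, g j = descentIntegral H m t (Finset.Icc 1 j) := fun j hj => if_pos hj
  rw [Finset.Nat.sum_antidiagonal_eq_sum_range_succ (fun j k =>
    ((-1 : ℝ) ^ j • descentIntegral H j t (Finset.Icc 1 (j - 1))) *
      (f k • descentIntegral H k t ∅)), Finset.sum_range_succ']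
  have h0 : ((-1 : ℝ) ^ 0 • descentIntegral H 0 t (Finset.Icc 1 (0 - 1))) *
      (f (m - 0) • descentIntegral H (m - 0) t ∅) = ((-1 : ℝ) ^ 0 * f (m - 0)) • g 0 := by
    simp [descentIntegral_zero, hgj 0 hm]
  have hs : ∀ j ∈ Finset.range m,
      ((-1 : ℝ) ^ (j + 1) • descentIntegral H (j + 1) t (Finset.Icc 1 (j + 1 - 1))) *
        (f (m - (j + 1)) • descentIntegral H (m - (j + 1)) t ∅) =
      ((-1 : ℝ) ^ (j + 1) * f (m - (j + 1))) • g j +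
        ((-1 : ℝ) ^ (j + 1) * f (m - (j + 1))) • g (j + 1) := by
    intro j hj
    have hj := Finset.mem_range.1 hj
    rw [smul_mul_smul_comm, Nat.add_sub_cancel, descentIntegral_Icc_mul_of_pos hH t hj, smul_add,
      hgj j hj]
  rw [h0, Finset.sum_congr rfl hs, Finset.sum_add_distrib, add_assoc,
    ← Finset.sum_range_succ' (fun j => ((-1 : ℝ) ^ j * f (m - j)) • g j) m,
    Finset.sum_range_succ, show g m = 0 from if_neg (lt_irrefl m), smul_zero, add_zero,
    ← Finset.sum_add_distrib]
  refine Finset.sum_congr rfl fun j hj => ?_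
  rw [hgj j (Finset.mem_range.1 hj), ← add_smul]
  congr 1
  ring

lemma HDyn_eq_sum_antidiagonal {H : ℝ → A} (hH : Continuous H) (m : ℕ) (t : ℝ) :
    HDyn H m t = ∑ p ∈ Finset.HasAntidiagonal.antidiagonal m,
      ((-1 : ℝ) ^ p.1 • descentIntegral H p.1 t (Finset.Icc 1 (p.1 - 1))) *
        ((p.2 : ℝ) • descentIntegral H p.2 t ∅) := by
  rcases m.eq_zero_or_pos with rfl | hm
  · simp [HDyn]
  rw [sum_antidiagonal_descentIntegral hH t hm (fun k => (k : ℝ)),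
    HDyn_eq_sum_descentIntegral hH]
  refine Finset.sum_congr rfl fun j hj => ?_
  have hj := Finset.mem_range.1 hj
  rw [Nat.cast_sub hj, Nat.cast_sub hj.le]
  push_cast
  congr 1
  ring

/-- The Dynkin recursion `n Hₙ = ∑ Hₐ H_{𝒟_b}`, summed over `a + b = n`. -/
lemma sum_antidiagonal_Hn_mul_HDyn {H : ℝ → A} (hH : Continuous H) (n : ℕ) (t : ℝ) :
    ∑ p ∈ Finset.HasAntidiagonal.antidiagonal n, Hn H p.1 t * HDyn H p.2 t = (n : ℝ) • Hn H n t := by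
  let I : PowerSeries A := .mk fun n => descentIntegral H n t ∅
  let D : PowerSeries A :=
    .mk fun n => (-1 : ℝ) ^ n • descentIntegral H n t (Finset.Icc 1 (n - 1))
  let Y : PowerSeries A := .mk fun n => (n : ℝ) • descentIntegral H n t ∅
  let B : PowerSeries A := .mk fun n => HDyn H n t
  have hDI : D * I = 1 := by
    ext m
    rw [PowerSeries.coeff_mul, PowerSeries.coeff_one]
    rcases m.eq_zero_or_pos with rfl | hm
    · simp [D, I, descentIntegral_zero]
    · have := sum_antidiagonal_descentIntegral hH t hm (fun _ => 1)
      simpa [D, I, hm.ne'] using this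
  have hDY : D * Y = B := by
    ext m
    simp only [PowerSeries.coeff_mul, D, Y, B, PowerSeries.coeff_mk, HDyn_eq_sum_antidiagonal hH]
  have hID : I * D = 1 := by
    have hI : PowerSeries.constantCoeff I = ((1 : Aˣ) : A) := by
      rw [← PowerSeries.coeff_zero_eq_constantCoeff_apply]
      simp [I, descentIntegral_zero]
    have hr := PowerSeries.mul_invOfUnit I 1 hI
    rwa [left_inv_eq_right_inv hDI hr]
  have hIB : I * B = Y := by rw [← hDY, ← mul_assoc, hID, one_mul]
  have := congrArg (PowerSeries.coeff n) hIB
  simpa [PowerSeries.coeff_mul, I, B, Y, Hn_eq_descentIntegral hH] using this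

lemma summable_natCast_mul_pow_pred_mul_pow_div_factorial (R M : ℝ) :
    Summable fun n : ℕ => (n : ℝ) * R ^ (n - 1) * (M ^ n / n.factorial) := by
  rw [← summable_nat_add_iff 1]
  refine ((Real.summable_pow_div_factorial (R * M)).mul_left M).congr fun n => ?_
  have : (n.factorial : ℝ) ≠ 0 := by positivity
  rw [Nat.factorial_succ, Nat.add_sub_cancel]
  push_cast
  field_simp
  ring

lemma summable_norm_pow_smul {A : Type*} [NormedRing A] [NormedAlgebra ℝ A] {a : ℕ → A} {K M : ℝ}
    (ha : ∀ n, ‖a n‖ ≤ K * (M ^ n / n.factorial))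
    (l : ℝ) : Summable fun n => ‖l ^ n • a n‖ := by
  refine .of_nonneg_of_le (fun _ => norm_nonneg _) (fun n => ?_)
    ((Real.summable_pow_div_factorial (|l| * M)).mul_left K)
  rw [norm_smul, norm_pow, Real.norm_eq_abs]
  calc |l| ^ n * ‖a n‖ ≤ |l| ^ n * (K * (M ^ n / n.factorial)) := by gcongr; exact ha n
    _ = K * ((|l| * M) ^ n / n.factorial) := by rw [mul_pow]; ring

lemma norm_deriv_pow_smul_le {A : Type*} [NormedRing A] [NormedAlgebra ℝ A] {a : ℕ → A} {K M : ℝ}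
    (ha : ∀ n, ‖a n‖ ≤ K * (M ^ n / n.factorial)) {z R : ℝ} (hz : |z| ≤ R) (n : ℕ) :
    ‖((n : ℝ) * z ^ (n - 1)) • a n‖ ≤ K * ((n : ℝ) * R ^ (n - 1) * (M ^ n / n.factorial)) := by
  have hR : 0 ≤ R := (abs_nonneg z).trans hz
  rw [norm_smul, norm_mul, norm_pow, Real.norm_eq_abs, Real.norm_eq_abs, Nat.abs_cast]
  calc (n : ℝ) * |z| ^ (n - 1) * ‖a n‖
      ≤ (n : ℝ) * R ^ (n - 1) * (K * (M ^ n / n.factorial)) := by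
        gcongr
        exact ha n
    _ = K * ((n : ℝ) * R ^ (n - 1) * (M ^ n / n.factorial)) := by ring

lemma smul_deriv_pow_smul {A : Type*} [NormedRing A] [NormedAlgebra ℝ A] (a : ℕ → A) (l : ℝ)
    (n : ℕ) :
    l • (((n : ℝ) * l ^ (n - 1)) • a n) = l ^ n • ((n : ℝ) • a n) := by
  rw [smul_smul, smul_smul]
  congr 1
  cases n with
  | zero => simp
  | succ n => rw [Nat.add_sub_cancel]; ring

lemma hasDerivAt_tsum_pow_smul {a : ℕ → A} {K M : ℝ}
    (ha : ∀ n, ‖a n‖ ≤ K * (M ^ n / n.factorial)) (l : ℝ) :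
    HasDerivAt (fun l : ℝ => ∑' n : ℕ, l ^ n • a n) (∑' n : ℕ, ((n : ℝ) * l ^ (n - 1)) • a n) l := by
  refine hasDerivAt_tsum_of_isPreconnected (t := Metric.ball (0 : ℝ) (|l| + 1)) (y₀ := l)
    (u := fun n : ℕ => K * ((n : ℝ) * (|l| + 1) ^ (n - 1) * (M ^ n / n.factorial)))
    (g := fun (n : ℕ) (z : ℝ) => z ^ n • a n)
    (g' := fun (n : ℕ) (z : ℝ) => ((n : ℝ) * z ^ (n - 1)) • a n)
    ((summable_natCast_mul_pow_pred_mul_pow_div_factorial _ M).mul_left K) Metric.isOpen_ball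
    (convex_ball _ _).isPreconnected (fun n z _ => (hasDerivAt_pow n z).smul_const (a n))
    (fun n z hz => norm_deriv_pow_smul_le ha (mem_ball_zero_iff.1 hz).le n) (by simp)
    (summable_norm_pow_smul ha l).of_norm (by simp)

/-- toy-model RG equation: for every `λ ∈ ℝ`, the series
`A^λ(t) = Σ_{n≥0} λ^n H_n(t)` and `β^λ(t) = Σ_{n≥1} λ^n H_{𝒟_n}(t)` converge
absolutely, `λ ↦ A^λ(t)` is differentiable, and
`λ·(∂/∂λ) A^λ(t) = A^λ(t)·β^λ(t)`. -/
theorem toy_RG_equation (H : ℝ → A) (hH : Continuous H) (t : ℝ) (ht : 0 ≤ t) (l : ℝ) :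
    Summable (fun n : ℕ => ‖l ^ n • Hn H n t‖) ∧
    Summable (fun n : ℕ => ‖l ^ (n + 1) • HDyn H (n + 1) t‖) ∧
    DifferentiableAt ℝ (fun l : ℝ => ∑' n : ℕ, l ^ n • Hn H n t) l ∧
    l • deriv (fun l : ℝ => ∑' n : ℕ, l ^ n • Hn H n t) l =
      (∑' n : ℕ, l ^ n • Hn H n t) * (∑' n : ℕ, l ^ (n + 1) • HDyn H (n + 1) t) := by
  obtain ⟨C, hC⟩ := (isCompact_Icc (a := (0 : ℝ)) (b := t)).exists_bound_of_continuousOn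
    hH.continuousOn
  have hinc : ∀ n, ‖Hn H n t‖ ≤ ‖(1 : A)‖ * ((C * t) ^ n / n.factorial) := fun n => by
    rw [Hn_eq_descentIntegral hH, descentIntegral_empty_eq_Hperm hH]
    exact norm_Hperm_le ht hC 1
  have hdec : ∀ n, ‖(-1 : ℝ) ^ n • descentIntegral H n t (Finset.Icc 1 (n - 1))‖ ≤
      ‖(1 : A)‖ * ((C * t) ^ n / n.factorial) := fun n => by
    simpa [norm_smul] using norm_descentIntegral_Icc_le hH ht hC n
  have hsum := summable_norm_pow_smul hinc l
  have hderiv := hasDerivAt_tsum_pow_smul hinc l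
  have hsum_deriv : Summable fun n : ℕ => ‖((n : ℝ) * l ^ (n - 1)) • Hn H n t‖ :=
    .of_nonneg_of_le (fun _ => norm_nonneg _) (norm_deriv_pow_smul_le hinc le_rfl)
      ((summable_natCast_mul_pow_pred_mul_pow_div_factorial _ _).mul_left _)
  have hsum_euler : Summable fun n : ℕ => ‖l ^ n • ((n : ℝ) • Hn H n t)‖ := by
    refine (hsum_deriv.mul_left ‖l‖).congr fun n => ?_
    rw [← smul_deriv_pow_smul (fun n => Hn H n t), norm_smul l]
  have hconv : ∀ (f g : ℕ → A) (n : ℕ),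
      ∑ p ∈ Finset.HasAntidiagonal.antidiagonal n, (l ^ p.1 • f p.1) * (l ^ p.2 • g p.2) =
        l ^ n • ∑ p ∈ Finset.HasAntidiagonal.antidiagonal n, f p.1 * g p.2 := fun f g n => by
    rw [Finset.smul_sum]
    refine Finset.sum_congr rfl fun p hp => ?_
    rw [smul_mul_smul_comm, ← pow_add, Finset.HasAntidiagonal.mem_antidiagonal.1 hp]
  have hsum_dyn : Summable fun n : ℕ => ‖l ^ n • HDyn H n t‖ := by
    have := summable_norm_sum_mul_antidiagonal_of_summable_norm
      (summable_norm_pow_smul hdec l) hsum_euler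
    refine this.congr fun n => ?_
    rw [hconv (fun n => (-1 : ℝ) ^ n • descentIntegral H n t (Finset.Icc 1 (n - 1)))
      (fun n => (n : ℝ) • Hn H n t), HDyn_eq_sum_antidiagonal hH]
    simp_rw [Hn_eq_descentIntegral hH]
  refine ⟨hsum, (summable_nat_add_iff 1).2 hsum_dyn, hderiv.differentiableAt, ?_⟩
  have hshift : ∑' n : ℕ, l ^ (n + 1) • HDyn H (n + 1) t = ∑' n : ℕ, l ^ n • HDyn H n t := by
    rw [hsum_dyn.of_norm.tsum_eq_zero_add]
    simp [HDyn]
  rw [hderiv.deriv, hshift, ← hsum_deriv.of_norm.tsum_const_smul,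
    tsum_mul_tsum_eq_tsum_sum_antidiagonal_of_summable_norm hsum hsum_dyn]
  refine tsum_congr fun n => ?_
  rw [smul_deriv_pow_smul (fun n => Hn H n t), hconv (fun n => Hn H n t) (fun n => HDyn H n t),
    sum_antidiagonal_Hn_mul_HDyn hH]
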